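/- Let B be a block on n vertices and G obtained by attaching k whiskers, 4 ≤ k, such that G is accessible and no cut vertex w of G satisfies that N_B(w) avoids all cut sets of G \ {w} (i.e., for every cut vertex w there is a cut set of G \ {w} containing N_B(w)). Then every vertex of B has degree at least 3 in B, every cut vertex v satisfies |N_B(v)| ≤ ⌊(n+k)/2⌋ − 2, and at most one non-cut vertex of B has degree n − 1 in B; consequently 3n/2 ≤ |E(B)| ≤ (1/2)( k(⌊(n+k)/2⌋ − 2) + (n−1) + (n−2)(n−k−1) ). -/

import Mathlib

open SimpleGraph Finset

variable {V : Type*}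

/-- Number of connected components of the induced subgraph on the complement of `S`. -/
noncomputable def ncomp (G : SimpleGraph V) (S : Finset V) : ℕ :=
  Nat.card ((G.induce {v | v ∉ S}).ConnectedComponent)

/-- `S` is a cut set of `G`. -/
def cutSet [DecidableEq V] (G : SimpleGraph V) (S : Finset V) : Prop :=
  S = ∅ ∨ ∀ i ∈ S, ncomp G (S.erase i) < ncomp G S

/-- `G` is combinatorially unmixed. -/
def unmixed [DecidableEq V] (G : SimpleGraph V) : Prop :=
  G.Connected ∧ ∀ S : Finset V, cutSet G S → ncomp G S = S.card + 1

/-- `G` is accessible. -/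
def accessible [DecidableEq V] (G : SimpleGraph V) : Prop :=
  unmixed G ∧ ∀ S : Finset V, cutSet G S → S ≠ ∅ → ∃ s ∈ S, cutSet G (S.erase s)

/-- A block: connected with no cut vertices. -/
def isBlock [DecidableEq V] (G : SimpleGraph V) : Prop :=
  G.Connected ∧ ∀ v : V, ¬ cutSet G {v}

/-- The graph obtained from `B` by attaching a whisker (pendant leaf) at each `f i`. -/
def whisker {k : ℕ} (B : SimpleGraph V) (f : Fin k → V) : SimpleGraph (V ⊕ Fin k) :=
  SimpleGraph.fromRel (fun x y => match x, y with
    | Sum.inl a, Sum.inl b => B.Adj a b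
    | Sum.inl a, Sum.inr i => a = f i
    | _, _ => False)

/-- A free vertex: a vertex contained in a unique maximal clique. -/
def freeVertex (G : SimpleGraph V) (v : V) : Prop :=
  ∃! s : Set V, v ∈ s ∧ G.IsClique s ∧ ∀ t, G.IsClique t → s ⊆ t → s = t

/-- `P` is closed under adjacency in the complement of `S`. -/
def closedOff (H : SimpleGraph V) (S : Finset V) (P : Set V) : Prop :=
  ∀ u v, u ∉ S → v ∉ S → H.Adj u v → u ∈ P → v ∈ P

/-- `x` and `y` are separated by `S`. -/
def sepBy (H : SimpleGraph V) (S : Finset V) (x y : V) : Prop :=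
  ∃ P : Set V, x ∈ P ∧ y ∉ P ∧ closedOff H S P

theorem sepBy.symm {H : SimpleGraph V} {S : Finset V} {x y : V} (h : sepBy H S x y) :
    sepBy H S y x := by
  obtain ⟨P, hx, hy, hP⟩ := h
  exact ⟨Pᶜ, hy, fun h => h hx, fun u v hu hv huv hup hvp => hup (hP v u hv hu huv.symm hvp)⟩

theorem sepBy.ne {H : SimpleGraph V} {S : Finset V} {x y : V} (h : sepBy H S x y) : x ≠ y := by
  rintro rfl
  obtain ⟨P, hx, hy, hP⟩ := h
  exact hy hx

theorem sepBy_iff (H : SimpleGraph V) (S : Finset V) (x y : V) (hx : x ∉ S) (hy : y ∉ S) :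
    sepBy H S x y ↔ ¬ (H.induce {v | v ∉ S}).Reachable ⟨x, hx⟩ ⟨y, hy⟩ := by
  constructor
  · rintro ⟨P, hxP, hyP, hP⟩ ⟨p⟩
    have key : ∀ (a b : {v | v ∉ S}), (H.induce {v | v ∉ S}).Walk a b → a.1 ∈ P → b.1 ∈ P := by
      intro a b p
      induction p with
      | nil => exact id
      | @cons a c b h p ih => exact fun ha => ih (hP a.1 c.1 a.2 c.2 h ha)
    exact hyP (key _ _ p hxP)
  · intro h
    refine ⟨{u | ∃ hu : u ∉ S, (H.induce {v | v ∉ S}).Reachable ⟨x, hx⟩ ⟨u, hu⟩},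
      ⟨hx, Reachable.refl _⟩, fun ⟨_, h'⟩ => h h', ?_⟩
    rintro u v hu hv huv ⟨_, h'⟩
    refine ⟨hv, h'.trans (Adj.reachable ?_)⟩
    exact huv

theorem sepBy_erase [DecidableEq V] {H : SimpleGraph V} {S : Finset V} {i x y : V} {P : Set V}
    (hxP : x ∈ P) (hyP : y ∉ P) (hP : closedOff H S P) (hxi : x ≠ i)
    (h : ∀ v, v ∈ P → v ∉ S → ¬ H.Adj i v) : sepBy H (S.erase i) x y := by
  refine ⟨P \ {i}, ⟨hxP, hxi⟩, fun h => hyP h.1, ?_⟩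
  rintro u v hu hv huv ⟨huP, hui⟩
  have hui' : u ≠ i := hui
  have hu' : u ∉ S := fun h' => hu (mem_erase.2 ⟨hui', h'⟩)
  by_cases hvi : v = i
  · subst hvi
    exact absurd huv.symm (h u huP hu')
  · exact ⟨hP u v hu' (fun h' => hv (mem_erase.2 ⟨hvi, h'⟩)) huv huP, hvi⟩

/-- The natural map on components. -/
noncomputable def compMap [DecidableEq V] (H : SimpleGraph V) (S : Finset V) (i : V) :
    (H.induce {v | v ∉ S}).ConnectedComponent →
      (H.induce {v | v ∉ S.erase i}).ConnectedComponent :=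
  ConnectedComponent.map (SimpleGraph.induceHomOfLE H
    (show ({v | v ∉ S} : Set V) ≤ {v | v ∉ S.erase i} from
      fun _ hv h => hv (mem_of_mem_erase h))).toHom

theorem card_drop {α β : Type*} [Finite α] (φ : α → β) (D : Finset α)
    (h : ∀ b, ∃ a, a ∉ D ∧ φ a = b) : Nat.card β + D.card ≤ Nat.card α := by
  classical
  have := Fintype.ofFinite α
  have hs : Function.Surjective φ := fun b => (h b).imp fun _ h => h.2
  have := Fintype.ofSurjective φ hs
  rw [Nat.card_eq_fintype_card, Nat.card_eq_fintype_card]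
  have h1 : (univ : Finset β) ⊆ (Dᶜ).image φ := by
    intro b _
    obtain ⟨a, ha, rfl⟩ := h b
    exact mem_image_of_mem _ (by simpa using ha)
  have h2 := (card_le_card h1).trans card_image_le
  have h3 := D.card_compl_add_card
  rw [card_univ] at h2
  omega

theorem compMap_lift [DecidableEq V] (H : SimpleGraph V) (S : Finset V) (i x : V)
    (hx : x ∉ S) (hix : H.Adj i x)
    (b : (H.induce {v | v ∉ S.erase i}).ConnectedComponent) :
    (∃ (u : V) (hu : u ∉ S), b = compMap H S i (connectedComponentMk _ ⟨u, hu⟩)) := by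
  induction b using ConnectedComponent.ind with
  | h v =>
    obtain ⟨v, hv⟩ := v
    by_cases hvi : v = i
    · subst hvi
      refine ⟨x, hx, ?_⟩
      refine ConnectedComponent.sound (Adj.reachable ?_)
      exact hix
    · refine ⟨v, fun h => hv (mem_erase.2 ⟨hvi, h⟩), rfl⟩

theorem compMap_eq [DecidableEq V] (H : SimpleGraph V) (S : Finset V) (i x y : V)
    (hx : x ∉ S) (hy : y ∉ S) (hix : H.Adj i x) (hiy : H.Adj i y) :
    compMap H S i (connectedComponentMk _ ⟨x, hx⟩) =
    compMap H S i (connectedComponentMk _ ⟨y, hy⟩) := by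
  refine ConnectedComponent.sound ?_
  have hi : i ∉ S.erase i := notMem_erase _ _
  have h1 : (H.induce {v | v ∉ S.erase i}).Adj ⟨i, hi⟩ ⟨x, fun h => hx (mem_of_mem_erase h)⟩ := hix
  have h2 : (H.induce {v | v ∉ S.erase i}).Adj ⟨i, hi⟩ ⟨y, fun h => hy (mem_of_mem_erase h)⟩ := hiy
  exact h1.reachable.symm.trans h2.reachable

theorem cc_ne {H : SimpleGraph V} {S : Finset V} {x y : V} (hx : x ∉ S) (hy : y ∉ S)
    (h : sepBy H S x y) : connectedComponentMk (H.induce {v | v ∉ S}) ⟨x, hx⟩ ≠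
      connectedComponentMk (H.induce {v | v ∉ S}) ⟨y, hy⟩ := by
  intro h'
  exact (sepBy_iff H S x y hx hy).1 h (ConnectedComponent.exact h')

theorem ncomp_two [Finite V] [DecidableEq V] {H : SimpleGraph V} {S : Finset V} {i x y : V}
    (hx : x ∉ S) (hy : y ∉ S) (hix : H.Adj i x) (hiy : H.Adj i y) (hs : sepBy H S x y) :
    ncomp H (S.erase i) < ncomp H S := by
  have := card_drop (compMap H S i) {connectedComponentMk _ ⟨y, hy⟩} (by
    intro b
    obtain ⟨u, hu, rfl⟩ := compMap_lift H S i x hx hix b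
    by_cases h : connectedComponentMk (H.induce {v | v ∉ S}) ⟨u, hu⟩ = connectedComponentMk _ ⟨y, hy⟩
    · refine ⟨connectedComponentMk _ ⟨x, hx⟩, ?_, ?_⟩
      · simpa using (sepBy_iff H S x y hx hy).1 hs
      · rw [h]; exact compMap_eq H S i x y hx hy hix hiy
    · exact ⟨_, by rwa [mem_singleton], rfl⟩)
  rw [card_singleton] at this
  exact this

theorem ncomp_three [Finite V] [DecidableEq V] {H : SimpleGraph V} {S : Finset V} {i x y z : V}
    (hx : x ∉ S) (hy : y ∉ S) (hz : z ∉ S) (hix : H.Adj i x) (hiy : H.Adj i y) (hiz : H.Adj i z)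
    (hxy : sepBy H S x y) (hxz : sepBy H S x z) (hyz : sepBy H S y z) :
    ncomp H (S.erase i) + 2 ≤ ncomp H S := by
  classical
  have := card_drop (compMap H S i) {connectedComponentMk _ ⟨y, hy⟩, connectedComponentMk _ ⟨z, hz⟩} (by
    intro b
    obtain ⟨u, hu, rfl⟩ := compMap_lift H S i x hx hix b
    have hxm : connectedComponentMk (H.induce {v | v ∉ S}) ⟨x, hx⟩ ∉
      ({connectedComponentMk _ ⟨y, hy⟩, connectedComponentMk _ ⟨z, hz⟩} : Finset _) := by
      rw [mem_insert, mem_singleton]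
      rintro (h | h)
      · exact cc_ne hx hy hxy h
      · exact cc_ne hx hz hxz h
    by_cases h : connectedComponentMk (H.induce {v | v ∉ S}) ⟨u, hu⟩ = connectedComponentMk _ ⟨y, hy⟩
    · refine ⟨connectedComponentMk _ ⟨x, hx⟩, hxm, ?_⟩
      rw [h]; exact compMap_eq H S i x y hx hy hix hiy
    by_cases h' : connectedComponentMk (H.induce {v | v ∉ S}) ⟨u, hu⟩ = connectedComponentMk _ ⟨z, hz⟩
    · refine ⟨connectedComponentMk _ ⟨x, hx⟩, hxm, ?_⟩
      rw [h']; exact compMap_eq H S i x z hx hz hix hiz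
    · refine ⟨_, ?_, rfl⟩
      rw [mem_insert, mem_singleton]
      tauto)
  rw [card_pair (cc_ne hy hz hyz)] at this
  exact this

theorem ncomp_le [Fintype V] [DecidableEq V] {H : SimpleGraph V} {S : Finset V} {x y : V}
    (hx : x ∉ S) (hy : y ∉ S) (h : H.Adj x y) : ncomp H S + 1 + S.card ≤ Fintype.card V := by
  have := card_drop (fun v : {v | v ∉ S} => connectedComponentMk (H.induce {v | v ∉ S}) v)
    {⟨y, hy⟩} (by
      intro b
      induction b using ConnectedComponent.ind with
      | h v =>
        by_cases hv : v = ⟨y, hy⟩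
        · refine ⟨⟨x, hx⟩, ?_, ?_⟩
          · rw [mem_singleton]
            intro h'
            exact h.ne (congrArg Subtype.val h')
          · subst hv
            refine ConnectedComponent.sound (Adj.reachable ?_)
            exact h
        · exact ⟨v, by rwa [mem_singleton], rfl⟩)
  rw [card_singleton] at this
  have h2 : Nat.card {v | v ∉ S} + S.card = Fintype.card V := by
    have : {v | v ∉ S} = ((Sᶜ : Finset V) : Set V) := by ext; simp
    rw [this, Nat.card_coe_set_eq, Set.ncard_coe_finset, card_compl_add_card]
  have : ncomp H S + 1 ≤ Nat.card {v | v ∉ S} := this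
  omega

theorem exists_sep [Finite V] [DecidableEq V] {H : SimpleGraph V} {S : Finset V} {i : V}
    (hi : i ∈ S) (h : ncomp H (S.erase i) < ncomp H S) :
    ∃ x y, x ∉ S ∧ y ∉ S ∧ H.Adj i x ∧ H.Adj i y ∧ sepBy H S x y := by
  by_contra hcon
  push Not at hcon
  refine absurd h (not_lt.2 ?_)
  refine Nat.card_le_card_of_injective (compMap H S i) ?_
  intro a b hab
  induction a using ConnectedComponent.ind with
  | h u =>
  induction b using ConnectedComponent.ind with
  | h v =>
    obtain ⟨u, hu⟩ := u
    obtain ⟨v, hv⟩ := v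
    by_contra hne
    have hr : ¬ (H.induce {v | v ∉ S}).Reachable ⟨u, hu⟩ ⟨v, hv⟩ :=
      fun h => hne (ConnectedComponent.sound h)
    have hui : u ≠ i := fun h => hu (h ▸ hi)
    have hvi : v ≠ i := fun h => hv (h ▸ hi)
    have hu' : u ∉ S.erase i := fun h => hu (mem_of_mem_erase h)
    have hv' : v ∉ S.erase i := fun h => hv (mem_of_mem_erase h)
    have hr' : (H.induce {v | v ∉ S.erase i}).Reachable ⟨u, hu'⟩ ⟨v, hv'⟩ :=
      ConnectedComponent.exact hab
    have hns : ¬ sepBy H (S.erase i) u v := fun h => (sepBy_iff _ _ _ _ hu' hv').1 h hr'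
    obtain ⟨P, huP, hvP, hP⟩ := (sepBy_iff H S u v hu hv).2 hr
    by_cases hex : ∃ p, p ∈ P ∧ p ∉ S ∧ H.Adj i p
    · obtain ⟨p, hpP, hpS, hip⟩ := hex
      refine hns (sepBy.symm ?_)
      refine sepBy_erase (P := Pᶜ) hvP (fun h => h huP) ?_ hvi ?_
      · exact fun u v hu hv huv hup hvp => hup (hP v u hv hu huv.symm hvp)
      · intro q hq hqS hiq
        exact hcon p q hpS hqS hip hiq ⟨P, hpP, hq, hP⟩
    · push Not at hex
      exact hns (sepBy_erase huP hvP hP hui hex)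

theorem cutSet_iff [Finite V] [DecidableEq V] {H : SimpleGraph V} {S : Finset V} :
    cutSet H S ↔ ∀ i ∈ S, ∃ x y, x ∉ S ∧ y ∉ S ∧ H.Adj i x ∧ H.Adj i y ∧ sepBy H S x y := by
  constructor
  · rintro (rfl | h) i hi
    · simp at hi
    · exact exists_sep hi (h i hi)
  · intro h
    right
    intro i hi
    obtain ⟨x, y, hx, hy, hix, hiy, hs⟩ := h i hi
    exact ncomp_two hx hy hix hiy hs

section
variable {k : ℕ} {B : SimpleGraph V} {f : Fin k → V}

@[simp] theorem wh_ll {a b : V} : (whisker B f).Adj (Sum.inl a) (Sum.inl b) ↔ B.Adj a b := by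
  simp only [whisker, fromRel_adj]
  constructor
  · rintro ⟨_, h | h⟩
    · exact h
    · exact h.symm
  · intro h
    exact ⟨fun h' => h.ne (Sum.inl_injective h'), Or.inl h⟩

@[simp] theorem wh_lr {a : V} {i : Fin k} :
    (whisker B f).Adj (Sum.inl a) (Sum.inr i) ↔ a = f i := by
  simp [whisker]

@[simp] theorem wh_rl {a : V} {i : Fin k} :
    (whisker B f).Adj (Sum.inr i) (Sum.inl a) ↔ a = f i := by
  simp [whisker]

@[simp] theorem wh_rr {i j : Fin k} :
    ¬ (whisker B f).Adj (Sum.inr i) (Sum.inr j) := by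
  simp [whisker]

theorem key_set [Fintype V] [DecidableEq V] (hf : Function.Injective f) (j : Fin k)
    (h : ∃ S : Finset {x : V ⊕ Fin k // x ≠ Sum.inl (f j)},
      cutSet ((whisker B f).induce {x | x ≠ Sum.inl (f j)}) S ∧
      ∀ u, B.Adj (f j) u → Sum.inl u ∈ S.image Subtype.val) :
    ∃ S : Finset (V ⊕ Fin k), Sum.inl (f j) ∉ S ∧ Sum.inr j ∉ S ∧
      (∀ u, B.Adj (f j) u → Sum.inl u ∈ S) ∧
      ∀ s ∈ S, ∃ x y, x ∉ S ∧ y ∉ S ∧ (whisker B f).Adj s x ∧ (whisker B f).Adj s y ∧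
        sepBy (whisker B f) S x y ∧ sepBy (whisker B f) S x (Sum.inl (f j)) ∧
        sepBy (whisker B f) S y (Sum.inl (f j)) := by
  obtain ⟨S, hS, hN⟩ := h
  rw [cutSet_iff] at hS
  have hmem : ∀ (x : V ⊕ Fin k) (hx : x ≠ Sum.inl (f j)),
      x ∈ S.image Subtype.val ↔ (⟨x, hx⟩ : {x : V ⊕ Fin k // x ≠ Sum.inl (f j)}) ∈ S := by
    intro x hx
    simp [hx]
  have ha : Sum.inl (f j) ∉ S.image Subtype.val := by simp
  have main : ∀ (s x y : {x : V ⊕ Fin k // x ≠ Sum.inl (f j)}), x ∉ S → y ∉ S →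
      (whisker B f).Adj s.1 x.1 → sepBy ((whisker B f).induce {x | x ≠ Sum.inl (f j)}) S x y →
      ∃ P : Set (V ⊕ Fin k), x.1 ∈ P ∧ y.1 ∉ P ∧ Sum.inl (f j) ∉ P ∧
        closedOff (whisker B f) (S.image Subtype.val) P := by
    rintro ⟨s, hs⟩ ⟨x, hxa⟩ ⟨y, hya⟩ hx hy hsx ⟨P, hxP, hyP, hP⟩
    refine ⟨{u | u ≠ Sum.inr j ∧ ∃ hu : u ≠ Sum.inl (f j), (⟨u, hu⟩ : {x : V ⊕ Fin k // x ≠ Sum.inl (f j)}) ∈ P}, ⟨?_, hxa, hxP⟩, ?_, ?_, ?_⟩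
    · intro h
      subst h
      rcases s with s | s
      · simp only [wh_lr] at hsx
        exact hs (by rw [hsx])
      · simp at hsx
    · rintro ⟨_, _, h⟩
      exact hyP h
    · rintro ⟨_, h, _⟩
      exact h rfl
    · rintro u v hu hv huv ⟨huj, hua, huP⟩
      have hvj : v ≠ Sum.inr j := by
        rintro rfl
        rcases u with u | u
        · simp only [wh_lr] at huv
          exact hua (by rw [huv])
        · simp at huv
      have hva : v ≠ Sum.inl (f j) := by
        rintro rfl
        rcases u with u | u
        · simp only [wh_ll] at huv
          exact hu (hN u huv.symm)
        · simp only [wh_rl] at huv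
          exact huj (by rw [hf huv])
      refine ⟨hvj, hva, ?_⟩
      refine hP ⟨u, hua⟩ ⟨v, hva⟩ ?_ ?_ huv huP
      · rwa [← hmem]
      · rwa [← hmem]
  refine ⟨S.image Subtype.val, ha, ?_, hN, ?_⟩
  · intro h
    rw [hmem _ (by simp)] at h
    obtain ⟨x, y, hx, hy, hix, hiy, hs⟩ := hS _ h
    obtain ⟨x, hxa⟩ := x
    have hix : (whisker B f).Adj (Sum.inr j) x := hix
    rcases x with x | x
    · simp only [wh_rl] at hix
      exact hxa (by rw [hix])
    · simp at hix
  · intro s hs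
    obtain ⟨⟨s, hsa⟩, hsS, rfl⟩ := mem_image.1 hs
    obtain ⟨x, y, hx, hy, hix, hiy, hsep⟩ := hS _ hsS
    obtain ⟨P, h1, h2, h3, h4⟩ := main ⟨s, hsa⟩ x y hx hy hix hsep
    obtain ⟨Q, g1, g2, g3, g4⟩ := main ⟨s, hsa⟩ y x hy hx hiy hsep.symm
    refine ⟨x.1, y.1, ?_, ?_, hix, hiy, ⟨P, h1, h2, h4⟩, ⟨P, h1, h3, h4⟩, ⟨Q, g1, g3, g4⟩⟩
    · rwa [hmem _ x.2]
    · rwa [hmem _ y.2]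

theorem three_le_deg [Fintype V] [DecidableEq V] [DecidableRel B.Adj] {v a b c : V}
    (ha : B.Adj v a) (hb : B.Adj v b) (hc : B.Adj v c) (hab : a ≠ b) (hac : a ≠ c) (hbc : b ≠ c) :
    3 ≤ B.degree v := by
  rw [← card_neighborFinset_eq_degree]
  have : ({a, b, c} : Finset V) ⊆ B.neighborFinset v := by
    intro x hx
    simp only [mem_insert, mem_singleton] at hx
    rw [mem_neighborFinset]
    rcases hx with rfl | rfl | rfl <;> assumption
  have h := card_le_card this
  rwa [card_eq_three.2 ⟨a, b, c, hab, hac, hbc, rfl⟩] at h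

theorem deg_of_adj [Fintype V] [DecidableEq V] [DecidableRel B.Adj] (hf : Function.Injective f)
    (hacc : accessible (whisker B f)) (j : Fin k)
    (h : ∃ S : Finset {x : V ⊕ Fin k // x ≠ Sum.inl (f j)},
      cutSet ((whisker B f).induce {x | x ≠ Sum.inl (f j)}) S ∧
      ∀ u, B.Adj (f j) u → Sum.inl u ∈ S.image Subtype.val)
    (w : V) (hw : B.Adj (f j) w) : 3 ≤ B.degree w := by
  obtain ⟨S, haS, hlS, hN, hS⟩ := key_set hf j h
  have hcut : cutSet (whisker B f) S := by
    rw [cutSet_iff]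
    intro i hi
    obtain ⟨x, y, h1, h2, h3, h4, h5, -⟩ := hS i hi
    exact ⟨x, y, h1, h2, h3, h4, h5⟩
  have hwS := hN w hw
  -- the case of a leaf
  have leafcase : ∀ (d : V) (i : Fin k), Sum.inl d ∉ S → Sum.inr i ∉ S → B.Adj w d → w = f i →
      sepBy (whisker B f) S (Sum.inl d) (Sum.inr i) →
      sepBy (whisker B f) S (Sum.inl d) (Sum.inl (f j)) →
      sepBy (whisker B f) S (Sum.inr i) (Sum.inl (f j)) → 3 ≤ B.degree w := by
    intro d i hd hi hwd hwi s1 s2 s3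
    by_contra hdeg
    have hnb : ∀ u, B.Adj w u → u = d ∨ u = f j := by
      intro u hu
      by_contra hcon
      push Not at hcon
      exact hdeg (three_le_deg hu hwd hw.symm hcon.1 hcon.2
        (fun h => s2.ne (by rw [h])))
    have h3 := ncomp_three (i := Sum.inl w) hd hi haS (wh_ll.2 hwd) (wh_lr.2 hwi)
      (wh_ll.2 hw.symm) s1 s2 s3
    have hcut' : cutSet (whisker B f) (S.erase (Sum.inl w)) := by
      rw [cutSet_iff]
      intro s hs
      obtain ⟨hsw, hsS⟩ := mem_erase.1 hs
      obtain ⟨x, y, hx, hy, hsx, hsy, ⟨P, hxP, hyP, hP⟩, hxa, hya⟩ := hS s hsS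
      refine ⟨x, y, fun h => hx (mem_of_mem_erase h), fun h => hy (mem_of_mem_erase h), hsx, hsy, ?_⟩
      have gen : ∀ (x y : V ⊕ Fin k) (P : Set (V ⊕ Fin k)), x ∉ S → y ∉ S →
          (whisker B f).Adj s x → sepBy (whisker B f) S x (Sum.inl (f j)) → x ∈ P → y ∉ P →
          closedOff (whisker B f) S P → Sum.inl d ∉ P →
          sepBy (whisker B f) (S.erase (Sum.inl w)) x y := by
        intro x y P hx hy hsx ⟨Q, hxQ, haQ, hQ⟩ hxP hyP hP hdP
        refine sepBy_erase (P := (P ∩ Q) \ {Sum.inr i}) ⟨⟨hxP, hxQ⟩, ?_⟩ (fun h => hyP h.1.1) ?_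
          (fun h => hx (h ▸ hwS)) ?_
        · intro h
          have h : x = Sum.inr i := h
          subst h
          rcases s with s | s
          · simp only [wh_lr] at hsx
            exact hsw (by rw [hsx, hwi])
          · simp at hsx
        · rintro u v hu hv huv ⟨⟨huP, huQ⟩, hui⟩
          refine ⟨⟨hP u v hu hv huv huP, hQ u v hu hv huv huQ⟩, ?_⟩
          intro h
          have h : v = Sum.inr i := h
          subst h
          rcases u with u | u
          · simp only [wh_lr] at huv
            exact hu (by rw [huv, ← hwi]; exact hwS)
          · simp at huv
        · rintro v ⟨⟨hvP, hvQ⟩, hvi⟩ hvS hwv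
          rcases v with v | v
          · rcases hnb v (wh_ll.1 hwv) with rfl | rfl
            · exact hdP hvP
            · exact haQ hvQ
          · simp only [wh_lr] at hwv
            apply hvi
            rw [hf (hwv.symm.trans hwi)]
            rfl
      by_cases hdP : Sum.inl d ∈ P
      · refine (gen y x Pᶜ hy hx hsy hya hyP (fun h => h hxP) ?_ (fun h => h hdP)).symm
        exact fun u v hu hv huv hup hvp => hup (hP v u hv hu huv.symm hvp)
      · exact gen x y P hx hy hsx hxa hxP hyP hP hdP
    have e1 := hacc.1.2 _ hcut
    have e2 := hacc.1.2 _ hcut'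
    rw [card_erase_of_mem hwS] at e2
    have : 0 < S.card := card_pos.2 ⟨_, hwS⟩
    omega
  obtain ⟨x, y, hx, hy, hwx, hwy, hxy, hxa, hya⟩ := hS _ hwS
  rcases x with x | x <;> rcases y with y | y
  · exact three_le_deg (wh_ll.1 hwx) (wh_ll.1 hwy) hw.symm (fun h => hxy.ne (by rw [h]))
      (fun h => hxa.ne (by rw [h])) (fun h => hya.ne (by rw [h]))
  · exact leafcase x y hx hy (wh_ll.1 hwx) (wh_lr.1 hwy) hxy hxa hya
  · exact leafcase y x hy hx (wh_ll.1 hwy) (wh_lr.1 hwx) hxy.symm hya hxa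
  · exact absurd (by rw [hf ((wh_lr.1 hwx).symm.trans (wh_lr.1 hwy))]) hxy.ne

theorem deg_bound [Fintype V] [DecidableEq V] [DecidableRel B.Adj] (hf : Function.Injective f)
    (hacc : accessible (whisker B f)) (j : Fin k)
    (h : ∃ S : Finset {x : V ⊕ Fin k // x ≠ Sum.inl (f j)},
      cutSet ((whisker B f).induce {x | x ≠ Sum.inl (f j)}) S ∧
      ∀ u, B.Adj (f j) u → Sum.inl u ∈ S.image Subtype.val)
    (hpos : 0 < B.degree (f j)) :
    B.degree (f j) ≤ (Fintype.card V + k) / 2 - 2 := by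
  obtain ⟨S, haS, hlS, hN, hS⟩ := key_set hf j h
  have hcut : cutSet (whisker B f) S := by
    rw [cutSet_iff]
    intro i hi
    obtain ⟨x, y, h1, h2, h3, h4, h5, -⟩ := hS i hi
    exact ⟨x, y, h1, h2, h3, h4, h5⟩
  have hsub : (B.neighborFinset (f j)).map ⟨Sum.inl, Sum.inl_injective⟩ ⊆ S := by
    intro x hx
    obtain ⟨u, hu, rfl⟩ := mem_map.1 hx
    exact hN u ((mem_neighborFinset _ _ _).1 hu)
  have hlt : B.degree (f j) < S.card := by
    rw [← card_neighborFinset_eq_degree, ← card_map ⟨Sum.inl, Sum.inl_injective⟩]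
    refine card_lt_card (hsub.ssubset_of_ne ?_)
    intro heq
    have hne : S ≠ ∅ := by
      rintro rfl
      rw [map_eq_empty, ← card_eq_zero, card_neighborFinset_eq_degree] at heq
      omega
    obtain ⟨s, hs, hcut'⟩ := hacc.2 S hcut hne
    have hs' := hs
    rw [← heq] at hs'
    obtain ⟨u, hu, rfl⟩ := mem_map.1 hs'
    obtain ⟨x, y, hx, hy, hwx, hwy, hxy, hxa, hya⟩ := hS _ hs
    have h3 := ncomp_three hx hy haS hwx hwy
      (wh_ll.2 ((mem_neighborFinset _ _ _).1 hu).symm) hxy hxa hya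
    have e1 := hacc.1.2 _ hcut
    have e2 := hacc.1.2 _ hcut'
    rw [card_erase_of_mem hs] at e2
    have : 0 < S.card := card_pos.2 ⟨_, hs⟩
    simp only [Function.Embedding.coeFn_mk] at h3 e2
    omega
  have hle := ncomp_le haS hlS (wh_lr.2 rfl : (whisker B f).Adj _ _)
  rw [hacc.1.2 _ hcut, Fintype.card_sum, Fintype.card_fin] at hle
  omega

theorem exists_exit {H : SimpleGraph V} (hH : H.Connected) (C : Set V) {x y : V} (hx : x ∈ C)
    (hy : y ∉ C) : ∃ u v, u ∈ C ∧ v ∉ C ∧ H.Adj u v := by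
  obtain ⟨p⟩ := hH.preconnected x y
  obtain ⟨d, -, h1, h2⟩ := p.exists_boundary_dart C hx hy
  exact ⟨d.fst, d.snd, h1, h2, d.adj⟩

theorem block_closed [Fintype V] [DecidableEq V] (hB : isBlock B) (C : Set V) (b v z : V)
    (hv : v ∈ C) (hb : b ∉ C) (hC : ∀ u ∈ C, ∀ w, B.Adj u w → w ∈ C ∨ w = b) :
    z ∈ C ∨ z = b := by
  by_contra hz
  push Not at hz
  obtain ⟨p, q, hp, hq, hpq⟩ := exists_exit hB.1 C hv hb
  obtain rfl := (hC p hp q hpq).resolve_left hq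
  obtain ⟨r, s, hr, hs, hrs⟩ := exists_exit hB.1 (C ∪ {q}) (Or.inl hv)
    (show z ∉ C ∪ {q} by simpa [and_comm] using hz)
  simp only [Set.union_singleton, Set.mem_insert_iff, not_or] at hr hs
  have hrq : r = q := by
    rcases hr with h | h
    · exact h
    · rcases hC r h s hrs with h' | h'
      · exact absurd h' hs.2
      · exact absurd h' hs.1
  subst hrq
  refine hB.2 r (cutSet_iff.2 ?_)
  intro i hi
  rw [mem_singleton] at hi
  subst hi
  refine ⟨p, s, ?_, ?_, hpq.symm, hrs, C, hp, hs.2, ?_⟩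
  · rw [mem_singleton]; rintro rfl; exact hq hp
  · simpa using hs.1
  · intro u v _ hv huv hu
    exact (hC u hu v huv).resolve_right (by simpa using hv)

theorem not_cut_single [Fintype V] [DecidableEq V] (hB : isBlock B) (b : V)
    (hb : b ∉ Set.range f) : ¬ cutSet (whisker B f) {Sum.inl b} := by
  intro h
  rw [cutSet_iff] at h
  obtain ⟨x, y, hx, hy, hbx, hby, P, hxP, hyP, hP⟩ := h _ (mem_singleton_self _)
  rcases x with x | x
  swap
  · exact hb ⟨x, (wh_lr.1 hbx).symm⟩
  rcases y with y | y
  swap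
  · exact hb ⟨y, (wh_lr.1 hby).symm⟩
  refine hB.2 b (cutSet_iff.2 ?_)
  intro i hi
  rw [mem_singleton] at hi
  subst hi
  refine ⟨x, y, by simpa using hx, by simpa using hy, wh_ll.1 hbx, wh_ll.1 hby,
    {u | Sum.inl u ∈ P}, hxP, hyP, ?_⟩
  intro u v hu hv huv huP
  exact hP _ _ (by simpa using hu) (by simpa using hv) (wh_ll.2 huv) huP

theorem exists_ne3 [Fintype V] (h : 4 ≤ Fintype.card V) (a b c : V) :
    ∃ z, z ≠ a ∧ z ≠ b ∧ z ≠ c := by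
  classical
  by_contra hcon
  push Not at hcon
  have : (univ : Finset V) ⊆ {a, b, c} := by
    intro z _
    simp only [mem_insert, mem_singleton]
    by_contra h
    push Not at h
    exact h.2.2 (hcon z h.1 h.2.1)
  have := (card_le_card this).trans card_le_three
  rw [card_univ] at this
  omega

theorem deg_of_not_adj [Fintype V] [DecidableEq V] [DecidableRel B.Adj] (hB : isBlock B)
    (hacc : accessible (whisker B f)) (hn : 4 ≤ Fintype.card V) (v : V)
    (hv : ∀ j, ¬ B.Adj v (f j)) : 3 ≤ B.degree v := by
  by_contra hdeg
  have hone : ∀ b, b ≠ v → ¬ ∀ w, B.Adj v w → w = b := by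
    intro b hbv h
    obtain ⟨z, h1, h2, -⟩ := exists_ne3 hn v b b
    rcases block_closed hB {v} b v z rfl hbv
      (fun u hu w huw => Or.inr (h w (by rw [← show u = v from hu]; exact huw))) with h | h
    · exact h1 h
    · exact h2 h
  have hcard : (B.neighborFinset v).card ≤ 2 := by
    rw [card_neighborFinset_eq_degree]; omega
  obtain ⟨b0, hb0, -, -⟩ := exists_ne3 hn v v v
  obtain ⟨a, hva, hab0⟩ : ∃ a, B.Adj v a ∧ a ≠ b0 := by
    have := hone b0 hb0
    push Not at this
    exact this
  obtain ⟨b, hvb, hba⟩ : ∃ b, B.Adj v b ∧ b ≠ a := by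
    have := hone a hva.ne'
    push Not at this
    exact this
  have hN : ∀ w, B.Adj v w → w = a ∨ w = b := by
    intro w hw
    by_contra hcon
    push Not at hcon
    exact hdeg (three_le_deg hw hva hvb hcon.1 hcon.2 hba.symm)
  have haW : a ∉ Set.range f := by
    rintro ⟨j, rfl⟩
    exact hv j hva
  have hbW : b ∉ Set.range f := by
    rintro ⟨j, rfl⟩
    exact hv j hvb
  have ext : ∀ a b, B.Adj v a → B.Adj v b → b ≠ a → (∀ w, B.Adj v w → w = a ∨ w = b) →
      ∃ y, B.Adj a y ∧ y ≠ v ∧ y ≠ a ∧ y ≠ b := by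
    intro a b hva hvb hba hN
    by_contra hcon
    push Not at hcon
    obtain ⟨z, h1, h2, h3⟩ := exists_ne3 hn v a b
    rcases block_closed hB {v, a} b v z (by simp) (by simp [hba, hvb.ne']) (by
      rintro u (rfl | hu) w huw
      · rcases hN w huw with rfl | rfl <;> simp
      · have hu : u = a := hu
        subst hu
        by_cases hwv : w = v
        · simp [hwv]
        · right
          exact hcon w huw hwv huw.ne') with h | h
    · rcases h with h | h
      · exact h1 h
      · exact h2 h
    · exact h3 h
  have sep : ∀ y, y ≠ v → sepBy (whisker B f) {Sum.inl a, Sum.inl b} (Sum.inl v) (Sum.inl y) := by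
    intro y hy
    refine ⟨{x | x = Sum.inl v ∨ ∃ i, x = Sum.inr i ∧ f i = v}, Or.inl rfl, by simpa using hy, ?_⟩
    rintro p q hp hq hpq (rfl | ⟨i, rfl, hi⟩)
    · rcases q with q | q
      · rcases hN q (wh_ll.1 hpq) with rfl | rfl <;> simp at hq
      · exact Or.inr ⟨q, rfl, (wh_lr.1 hpq).symm⟩
    · rcases q with q | q
      · exact Or.inl (by rw [wh_rl.1 hpq, hi])
      · simp at hpq
  have hcut : cutSet (whisker B f) {Sum.inl a, Sum.inl b} := by
    rw [cutSet_iff]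
    intro i hi
    rw [mem_insert, mem_singleton] at hi
    rcases hi with rfl | rfl
    · obtain ⟨y, h1, h2, h3, h4⟩ := ext a b hva hvb hba hN
      exact ⟨_, _, by simp [hva.ne, hvb.ne], by simp [h3, h4], wh_ll.2 hva.symm, wh_ll.2 h1, sep y h2⟩
    · obtain ⟨y, h1, h2, h3, h4⟩ := ext b a hvb hva hba.symm (fun w hw => (hN w hw).symm)
      exact ⟨_, _, by simp [hva.ne, hvb.ne], by simp [h3, h4], wh_ll.2 hvb.symm, wh_ll.2 h1, sep y h2⟩
  obtain ⟨s, hs, hcut'⟩ := hacc.2 _ hcut (by simp)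
  have hne : (Sum.inl a : V ⊕ Fin k) ≠ Sum.inl b := fun h => hba (Sum.inl_injective h).symm
  rw [mem_insert, mem_singleton] at hs
  rcases hs with rfl | rfl
  · rw [erase_insert (by simpa using hne)] at hcut'
    exact not_cut_single hB b hbW hcut'
  · rw [pair_comm, erase_insert (by simpa using hne.symm)] at hcut'
    exact not_cut_single hB a haW hcut'

theorem uniq_full [Fintype V] [DecidableEq V] [DecidableRel B.Adj]
    (hacc : accessible (whisker B f)) (a b : V) (hab : a ≠ b)
    (ha : a ∉ Set.range f) (hb : b ∉ Set.range f)
    (hfa : ∀ v, v ≠ a → B.Adj a v) (hfb : ∀ v, v ≠ b → B.Adj b v) :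
    ∀ (n : ℕ) (S : Finset (V ⊕ Fin k)), S.card = n → cutSet (whisker B f) S →
      ∀ c, c ∉ Set.range f → Sum.inl c ∉ S := by
  intro n
  induction n with
  | zero =>
    intro S hS _ c _
    rw [card_eq_zero.1 hS]
    simp
  | succ n ih =>
    intro S hS hcut c hc hcS
    obtain ⟨s, hs, hcut'⟩ := hacc.2 S hcut (by rintro rfl; simp at hS)
    have ih' := ih (S.erase s) (by rw [card_erase_of_mem hs]; omega) hcut'
    have huniq : ∀ d, d ∉ Set.range f → Sum.inl d ∈ S → Sum.inl d = s := by
      intro d hd hdS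
      by_contra hne
      exact ih' d hd (mem_erase.2 ⟨hne, hdS⟩)
    have main : ∀ a, (∀ v, v ≠ a → B.Adj a v) → Sum.inl a ∉ S → False := by
      intro a hfa haS
      obtain ⟨x, y, hx, hy, hcx, hcy, P, hxP, hyP, hP⟩ := (cutSet_iff.1 hcut) _ hcS
      rcases x with x | x
      swap
      · exact hc ⟨x, (wh_lr.1 hcx).symm⟩
      rcases y with y | y
      swap
      · exact hc ⟨y, (wh_lr.1 hcy).symm⟩
      have haP : Sum.inl a ∈ P := by
        by_cases hxa : x = a
        · rwa [← hxa]
        · exact hP _ _ hx haS (wh_ll.2 (hfa x hxa).symm) hxP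
      apply hyP
      by_cases hya : y = a
      · rwa [hya]
      · exact hP _ _ haS hy (wh_ll.2 (hfa y hya)) haP
    by_cases haS : Sum.inl a ∈ S
    · refine main b hfb fun hbS => hab ?_
      exact Sum.inl_injective ((huniq a ha haS).trans (huniq b hb hbS).symm)
    · exact main a hfa haS

theorem full_adj [Fintype V] [DecidableEq V] [DecidableRel B.Adj] (a : V)
    (h : B.degree a = Fintype.card V - 1) : ∀ v, v ≠ a → B.Adj a v := by
  intro v hv
  have hsub : B.neighborFinset a ⊆ univ.erase a := by
    intro x hx
    rw [mem_neighborFinset] at hx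
    simp [hx.ne']
  have := eq_of_subset_of_card_le hsub (by
    rw [card_erase_of_mem (mem_univ _), card_univ, card_neighborFinset_eq_degree, h])
  rw [← mem_neighborFinset, this]
  simp [hv]

end

theorem bounds_num_edges_block [Fintype V] [DecidableEq V] {k : ℕ}
    (B : SimpleGraph V) [DecidableRel B.Adj] (hB : isBlock B)
    (f : Fin k → V) (hf : Function.Injective f)
    (hk : 4 ≤ k) (hkn : k ≤ Fintype.card V)
    (hacc : accessible (whisker B f))
    (hyp : ∀ j : Fin k, ∃ S : Finset {x : V ⊕ Fin k // x ≠ Sum.inl (f j)},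
      cutSet ((whisker B f).induce {x | x ≠ Sum.inl (f j)}) S ∧
      ∀ u, B.Adj (f j) u → Sum.inl u ∈ S.image Subtype.val) :
    (∀ v : V, 3 ≤ B.degree v) ∧
    (∀ i : Fin k, B.degree (f i) ≤ (Fintype.card V + k) / 2 - 2) ∧
    (∀ a b : V, a ∉ Set.range f → b ∉ Set.range f →
      B.degree a = Fintype.card V - 1 → B.degree b = Fintype.card V - 1 → a = b) ∧
    3 * Fintype.card V ≤ 2 * B.edgeFinset.card ∧
    2 * B.edgeFinset.card ≤
      k * ((Fintype.card V + k) / 2 - 2) + (Fintype.card V - 1) +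
        (Fintype.card V - 2) * (Fintype.card V - k - 1) := by
  have h1 : ∀ v : V, 3 ≤ B.degree v := by
    intro v
    by_cases hv : ∃ j, B.Adj v (f j)
    · obtain ⟨j, hj⟩ := hv
      exact deg_of_adj hf hacc j (hyp j) v hj.symm
    · exact deg_of_not_adj hB hacc (hk.trans hkn) v (not_exists.1 hv)
  have h2 : ∀ i : Fin k, B.degree (f i) ≤ (Fintype.card V + k) / 2 - 2 := fun i =>
    deg_bound hf hacc i (hyp i) (lt_of_lt_of_le (by norm_num) (h1 _))
  have h3 : ∀ a b : V, a ∉ Set.range f → b ∉ Set.range f →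
      B.degree a = Fintype.card V - 1 → B.degree b = Fintype.card V - 1 → a = b := by
    intro a b ha hb hda hdb
    by_contra hab
    have j : Fin k := ⟨0, by omega⟩
    obtain ⟨S, -, -, hN, hS⟩ := key_set hf j (hyp j)
    have hcut : cutSet (whisker B f) S := by
      rw [cutSet_iff]
      intro i hi
      obtain ⟨x, y, h1, h2, h3, h4, h5, -⟩ := hS i hi
      exact ⟨x, y, h1, h2, h3, h4, h5⟩
    have haj : B.Adj (f j) a := (full_adj a hda (f j) (fun h => ha ⟨j, h⟩)).symm
    exact uniq_full hacc a b hab ha hb (full_adj a hda) (full_adj b hdb) _ S rfl hcut a ha (hN a haj)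
  refine ⟨h1, h2, h3, ?_, ?_⟩
  · rw [← sum_degrees_eq_twice_card_edges]
    calc 3 * Fintype.card V = ∑ _v : V, 3 := by simp [mul_comm]
      _ ≤ _ := sum_le_sum fun v _ => h1 v
  · rw [← sum_degrees_eq_twice_card_edges]
    set W : Finset V := univ.image f with hW
    have hWc : W.card = k := by
      rw [hW, card_image_of_injective _ hf, card_univ, Fintype.card_fin]
    have hsplit : ∑ v, B.degree v = ∑ v ∈ W, B.degree v + ∑ v ∈ Wᶜ, B.degree v :=
      (sum_add_sum_compl W _).symm
    have hA : ∑ v ∈ W, B.degree v ≤ k * ((Fintype.card V + k) / 2 - 2) := by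
      have := sum_le_card_nsmul W (fun v => B.degree v) ((Fintype.card V + k) / 2 - 2) (by
        intro v hv
        obtain ⟨i, -, rfl⟩ := mem_image.1 hv
        exact h2 i)
      rwa [hWc, smul_eq_mul] at this
    have hWcc : (Wᶜ).card = Fintype.card V - k := by rw [card_compl, hWc]
    have hr : ∀ v, v ∈ Wᶜ → v ∉ Set.range f := by
      intro v hv
      simpa [hW] using hv
    have hlt : ∀ v, B.degree v ≤ Fintype.card V - 1 := fun v => by
      have := B.degree_lt_card_verts v
      omega
    have hBd : ∑ v ∈ Wᶜ, B.degree v ≤ (Fintype.card V - 1) +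
        (Fintype.card V - 2) * (Fintype.card V - k - 1) := by
      rcases (Wᶜ).eq_empty_or_nonempty with he | ⟨z, hz⟩
      · rw [he]; simp
      obtain ⟨a, haW, ha⟩ : ∃ a ∈ Wᶜ, ∀ v ∈ (Wᶜ).erase a, B.degree v ≤ Fintype.card V - 2 := by
        by_cases hex : ∃ a ∈ Wᶜ, B.degree a = Fintype.card V - 1
        · obtain ⟨a, haW, ha⟩ := hex
          refine ⟨a, haW, fun v hv => ?_⟩
          obtain ⟨hva, hvW⟩ := mem_erase.1 hv
          have hne : B.degree v ≠ Fintype.card V - 1 := fun h =>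
            hva (h3 v a (hr v hvW) (hr a haW) h ha)
          have := hlt v
          omega
        · push Not at hex
          refine ⟨z, hz, fun v hv => ?_⟩
          have hne := hex v (mem_of_mem_erase hv)
          have := hlt v
          omega
      rw [← add_sum_erase _ _ haW]
      refine add_le_add (hlt a) ?_
      have := sum_le_card_nsmul _ _ _ ha
      rwa [card_erase_of_mem haW, hWcc, smul_eq_mul, mul_comm] at this
    omega
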